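/- Let L ⊆ Sⁿ be a Jordan subalgebra of (Sⁿ, •_U) with unit U ∈ L invertible, and let rad L := {X ∈ L : X •_U Y is nilpotent for every Y ∈ L}. Suppose rad L is a linear subspace of dimension k that contains all Jordan powers X^{•ℓ} (ℓ ≥ 1) of each of its elements X (this holds since rad L is an ideal). Then X^{•(k+1)} = 0 for every X ∈ rad L. -/

import Mathlib

open Matrix

noncomputable section

abbrev Mat (n : ℕ) := Matrix (Fin n) (Fin n) ℂ

/-- The Jordan product on symmetric matrices with unit `U`. -/
def jmul {n : ℕ} (U X Y : Mat n) : Mat n :=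
  (1 / 2 : ℂ) • (X * U⁻¹ * Y + Y * U⁻¹ * X)

/-- Jordan powers: `jpow U X ℓ = X^{•(ℓ+1)}`, i.e. `jpow U X 0 = X^{•1} = X` and
`X^{•(ℓ+1)} = X •_U X^{•ℓ}`. -/
def jpow {n : ℕ} (U X : Mat n) : ℕ → Mat n
  | 0 => X
  | (k + 1) => jmul U X (jpow U X k)

/-! The Jordan power `X^{•(ℓ+1)}` is `T ^ ℓ` applied to `X`, where `T` is the left multiplication by
`X`. The span of the powers of `X` is a `T`-invariant subspace of the radical, of dimension at most
`k`. The kernels of the powers of an endomorphism of this span stop growing at exponent `k` at the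
latest; so, as some `T ^ m` kills `X`, already `T ^ k` kills it. -/

open Module Submodule

section CyclicSubmodule

variable {K V : Type*} [Semiring K] [AddCommMonoid V] [Module K V]

/-- The smallest `f`-invariant submodule containing `v`, called the cyclic (or Krylov) subspace of
`v`. It replaces an ambient submodule that contains the orbit of `v` but need not be
`f`-invariant. -/
def cyclicSubmodule (f : End K V) (v : V) : Submodule K V :=
  span K (Set.range fun ℓ : ℕ => (f ^ ℓ) v)

lemma pow_apply_mem_cyclicSubmodule (f : End K V) (v : V) (ℓ : ℕ) :
    (f ^ ℓ) v ∈ cyclicSubmodule f v :=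
  subset_span ⟨ℓ, rfl⟩

lemma self_mem_cyclicSubmodule (f : End K V) (v : V) : v ∈ cyclicSubmodule f v :=
  pow_apply_mem_cyclicSubmodule f v 0

lemma cyclicSubmodule_le_iff {f : End K V} {v : V} {W : Submodule K V} :
    cyclicSubmodule f v ≤ W ↔ ∀ ℓ : ℕ, (f ^ ℓ) v ∈ W :=
  span_le.trans Set.range_subset_iff

lemma cyclicSubmodule_mem_invtSubmodule (f : End K V) (v : V) :
    cyclicSubmodule f v ∈ f.invtSubmodule := by
  rw [End.mem_invtSubmodule, cyclicSubmodule_le_iff]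
  intro ℓ
  rw [mem_comap, ← End.mul_apply, ← pow_succ']
  exact pow_apply_mem_cyclicSubmodule f v (ℓ + 1)

end CyclicSubmodule

section PowFinrank

variable {K V : Type*} [DivisionRing K] [AddCommGroup V] [Module K V]

lemma pow_finrank_apply_eq_zero_of_mem_invtSubmodule {f : End K V} {W : Submodule K V}
    [FiniteDimensional K W] (hW : W ∈ f.invtSubmodule) {v : V} (hv : v ∈ W) {m : ℕ}
    (hm : (f ^ m) v = 0) : (f ^ finrank K W) v = 0 := by
  have hfW : ∀ w ∈ W, f w ∈ W := (End.mem_invtSubmodule_iff_forall_mem_of_mem f).1 hW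
  have mem_ker_restrict_pow (ℓ : ℕ) :
      ⟨v, hv⟩ ∈ LinearMap.ker (f.restrict hfW ^ ℓ) ↔ (f ^ ℓ) v = 0 := by
    rw [End.pow_restrict ℓ hfW, LinearMap.mem_ker, ← coe_eq_zero, LinearMap.coe_restrict_apply]
  exact (mem_ker_restrict_pow _).1 <|
    End.ker_pow_le_ker_pow_finrank (f.restrict hfW) m ((mem_ker_restrict_pow m).2 hm)

lemma pow_finrank_apply_eq_zero_of_forall_pow_apply_mem {f : End K V} {R : Submodule K V}
    [FiniteDimensional K R] {v : V} (hR : ∀ ℓ : ℕ, (f ^ ℓ) v ∈ R) {m : ℕ}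
    (hm : (f ^ m) v = 0) : (f ^ finrank K R) v = 0 := by
  have hle : cyclicSubmodule f v ≤ R := cyclicSubmodule_le_iff.2 hR
  have : FiniteDimensional K (cyclicSubmodule f v) := finiteDimensional_of_le hle
  have h_cyclic : (f ^ finrank K (cyclicSubmodule f v)) v = 0 :=
    pow_finrank_apply_eq_zero_of_mem_invtSubmodule (cyclicSubmodule_mem_invtSubmodule f v)
      (self_mem_cyclicSubmodule f v) hm
  exact End.pow_map_zero_of_le (finrank_mono hle) h_cyclic

end PowFinrank

section Jordan

variable {n : ℕ}

/-- The Jordan product `•_U` as a bilinear map, so that `jordanMul U X` is the left multiplication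
by `X`, a linear endomorphism. -/
def jordanMul (U : Mat n) : Mat n →ₗ[ℂ] Mat n →ₗ[ℂ] Mat n :=
  LinearMap.mk₂ ℂ (jmul U)
    (fun X X' Y => by simp only [jmul, Matrix.add_mul, Matrix.mul_add]; module)
    (fun c X Y => by simp only [jmul, Matrix.smul_mul, Matrix.mul_smul]; module)
    (fun X Y Y' => by simp only [jmul, Matrix.add_mul, Matrix.mul_add]; module)
    (fun c X Y => by simp only [jmul, Matrix.smul_mul, Matrix.mul_smul]; module)

lemma jpow_eq_jordanMul_pow_apply (U X : Mat n) (ℓ : ℕ) : jpow U X ℓ = (jordanMul U X ^ ℓ) X := by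
  induction ℓ with
  | zero => rfl
  | succ ℓ ih => rw [pow_succ', End.mul_apply, ← ih]; rfl

lemma jmul_unit_right {U : Mat n} (hU : IsUnit U.det) (X : Mat n) : jmul U X U = X := by
  rw [jmul, nonsing_inv_mul_cancel_right _ _ hU, mul_nonsing_inv _ hU, Matrix.one_mul]
  module

end Jordan

/-- `mul` is the product of an arbitrary, not necessarily associative, algebra `A`, and
`(mul x ^ ℓ) x` is the power `x^{ℓ+1} = x (x (⋯ x))`. -/
theorem stmt4_general {K A : Type*} [Field K] [AddCommGroup A] [Module K A]
    (mul : A →ₗ[K] A →ₗ[K] A) (R : Submodule K A) [FiniteDimensional K R]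
    (hnil : ∀ x ∈ R, ∃ m : ℕ, (mul x ^ m) x = 0)
    (hpow : ∀ x ∈ R, ∀ ℓ : ℕ, (mul x ^ ℓ) x ∈ R) :
    ∀ x ∈ R, (mul x ^ finrank K R) x = 0 := by
  intro x hx
  obtain ⟨m, hm⟩ := hnil x hx
  exact pow_finrank_apply_eq_zero_of_forall_pow_apply_mem (hpow x hx) hm

/-- If the radical `rad L` has dimension `k`, then `X^{•(k+1)} = 0` for all
`X ∈ rad L`.  Here `rad L = {X ∈ L : X •_U Y is nilpotent for all Y ∈ L}` is assumed
to be a linear subspace `R` closed under Jordan powers of its elements. -/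
theorem stmt4 {n k : ℕ} (U : Mat n) (hU : IsUnit U.det)
    (L : Submodule ℂ (Mat n)) (hsym : ∀ X ∈ L, Matrix.IsSymm X)
    (hUL : U ∈ L) (hclosed : ∀ X ∈ L, ∀ Y ∈ L, jmul U X Y ∈ L)
    (R : Submodule ℂ (Mat n))
    (hR : (R : Set (Mat n)) =
      {X : Mat n | X ∈ L ∧ ∀ Y ∈ L, ∃ m : ℕ, jpow U (jmul U X Y) m = 0})
    (hk : Module.finrank ℂ R = k)
    (hpowR : ∀ X ∈ R, ∀ ℓ : ℕ, jpow U X ℓ ∈ R) :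
    ∀ X ∈ R, jpow U X k = 0 := by
  have hnil : ∀ X ∈ R, ∃ m, jpow U X m = 0 := fun X hX =>
    jmul_unit_right hU X ▸ (hR.subset hX).2 U hUL
  simp only [jpow_eq_jordanMul_pow_apply] at hnil hpowR ⊢
  exact hk ▸ stmt4_general (jordanMul U) R hnil hpowR
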